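/- arXiv:1812.09582 — 6 statements merged into one kernel-verified Lean document; each statement's English description precedes it below -/
import Mathlib

section
/- Consider the coupled system–optimizer dynamics of anytime real-time MPC. Assume: (a) the stage cost l : ℝⁿ×ℝᵐ → ℝ≥0 is continuous and positive definite (l(x,u) = 0 if and only if (x,u) = (0,0)); (b) there exist class-K∞ functions α̲, ᾱ such that α̲(‖(U,x)‖) ≤ J_N(U,x) ≤ ᾱ(‖(U,x)‖) for all (U,x) ∈ ℝ^{Nm}×ℝⁿ; (c) J_N(Ψ_tw(U,x), f(x,Π₀U)) − J_N(U,x) ≤ −l(x,Π₀U) for all (U,x); (d) there is a continuous function γ : ℝ^{Nm}×ℝⁿ → ℝ≥0 with γ(U,x) = 0 if and only if J_N(U,x) = J_N^*(x), such that J_N(Ψ_o(U,x),x) − J_N(U,x) ≤ −γ(U,x) for all (U,x). Then for every sequence of iteration numbers i_T(k) ∈ ℕ₊, the origin (U,x) = (0,0) is globally asymptotically stable for the closed loop: (stability) for every ε > 0 there is δ > 0 such that ‖(U(0),x(0))‖ ≤ δ implies ‖(U(k),x(k))‖ ≤ ε for all k ∈ ℕ; (global attractivity) for every initial condition (U(0),x(0)),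 the closed-loop trajectory satisfies (U(k),x(k)) → (0,0) as k → ∞. -/
open Filter Topology

/-- Global asymptotic stability of the origin for the coupled
system–optimizer dynamics of anytime real-time MPC (Theorem 1 of the paper).
`Φ i U x` is the `i`-fold optimizer map started from the temporal warm start,
`proj0` projects a stacked input sequence onto its first `m` coordinates, and the
Euclidean norm of a pair `(U,x)` is `√(‖U‖² + ‖x‖²)`. -/
theorem stmt_0 (n m N : ℕ) (hn : 0 < n) (hm : 0 < m) (hN : 0 < N)
    (f : EuclideanSpace ℝ (Fin n) → EuclideanSpace ℝ (Fin m) → EuclideanSpace ℝ (Fin n))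
    (l : EuclideanSpace ℝ (Fin n) → EuclideanSpace ℝ (Fin m) → ℝ)
    (J : EuclideanSpace ℝ (Fin (N * m)) → EuclideanSpace ℝ (Fin n) → ℝ)
    (Jstar : EuclideanSpace ℝ (Fin n) → ℝ)
    (Ψtw Ψo : EuclideanSpace ℝ (Fin (N * m)) → EuclideanSpace ℝ (Fin n) →
      EuclideanSpace ℝ (Fin (N * m)))
    (γ : EuclideanSpace ℝ (Fin (N * m)) → EuclideanSpace ℝ (Fin n) → ℝ)
    (proj0 : EuclideanSpace ℝ (Fin (N * m)) → EuclideanSpace ℝ (Fin m))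
    (hproj0 : ∀ U i, proj0 U i = U (Fin.castLE (Nat.le_mul_of_pos_left m hN) i))
    -- (a) the stage cost is continuous, nonnegative and positive definite
    (hl_cont : Continuous fun p : EuclideanSpace ℝ (Fin n) × EuclideanSpace ℝ (Fin m) =>
      l p.1 p.2)
    (hl_nonneg : ∀ x u, 0 ≤ l x u)
    (hl_pd : ∀ x u, l x u = 0 ↔ x = 0 ∧ u = 0)
    -- (b) class-K∞ upper and lower bounds on the cost
    (α β : ℝ → ℝ)
    (hα_cont : ContinuousOn α (Set.Ici 0)) (hα_mono : StrictMonoOn α (Set.Ici 0))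
    (hα0 : α 0 = 0) (hα_top : Tendsto α atTop atTop)
    (hβ_cont : ContinuousOn β (Set.Ici 0)) (hβ_mono : StrictMonoOn β (Set.Ici 0))
    (hβ0 : β 0 = 0) (hβ_top : Tendsto β atTop atTop)
    (hJ_lb : ∀ U x, α (Real.sqrt (‖U‖ ^ 2 + ‖x‖ ^ 2)) ≤ J U x)
    (hJ_ub : ∀ U x, J U x ≤ β (Real.sqrt (‖U‖ ^ 2 + ‖x‖ ^ 2)))
    (hJ_nonneg : ∀ U x, 0 ≤ J U x)
    -- value function
    (hJstar : ∀ x, IsGLB (Set.range fun U => J U x) (Jstar x))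
    -- (c) decrease of the temporal warm start
    (htw : ∀ U x, J (Ψtw U x) (f x (proj0 U)) - J U x ≤ -l x (proj0 U))
    -- (d) decrease of the optimization update operator
    (hγ_cont : Continuous fun p : EuclideanSpace ℝ (Fin (N * m)) × EuclideanSpace ℝ (Fin n) =>
      γ p.1 p.2)
    (hγ_nonneg : ∀ U x, 0 ≤ γ U x)
    (hγ_zero : ∀ U x, γ U x = 0 ↔ J U x = Jstar x)
    (ho : ∀ U x, J (Ψo U x) x - J U x ≤ -γ U x)
    -- the real-time iteration maps Φ⁰ = Ψtw, Φ^{i+1} = Ψo(Φ^i, f(x, proj0U))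
    (Φ : ℕ → EuclideanSpace ℝ (Fin (N * m)) → EuclideanSpace ℝ (Fin n) →
      EuclideanSpace ℝ (Fin (N * m)))
    (hΦ0 : ∀ U x, Φ 0 U x = Ψtw U x)
    (hΦs : ∀ i U x, Φ (i + 1) U x = Ψo (Φ i U x) (f x (proj0 U))) :
    -- stability
    (∀ ε > (0 : ℝ), ∃ δ > (0 : ℝ),
      ∀ (U : ℕ → EuclideanSpace ℝ (Fin (N * m))) (X : ℕ → EuclideanSpace ℝ (Fin n))
        (iT : ℕ → ℕ), (∀ k, 1 ≤ iT k) →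
        (∀ k, U (k + 1) = Φ (iT k) (U k) (X k)) →
        (∀ k, X (k + 1) = f (X k) (proj0 (U k))) →
        Real.sqrt (‖U 0‖ ^ 2 + ‖X 0‖ ^ 2) ≤ δ →
        ∀ k, Real.sqrt (‖U k‖ ^ 2 + ‖X k‖ ^ 2) ≤ ε) ∧
    -- global attractivity
    (∀ (U : ℕ → EuclideanSpace ℝ (Fin (N * m))) (X : ℕ → EuclideanSpace ℝ (Fin n))
      (iT : ℕ → ℕ), (∀ k, 1 ≤ iT k) →
      (∀ k, U (k + 1) = Φ (iT k) (U k) (X k)) →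
      (∀ k, X (k + 1) = f (X k) (proj0 (U k))) →
      Tendsto (fun k => (U k, X k)) atTop (𝓝 (0, 0))) := by
  have hJΦ : ∀ i U x, J (Φ i U x) (f x (proj0 U)) ≤ J (Ψtw U x) (f x (proj0 U)) := by
    intro i U x
    induction i with
    | zero => rw [hΦ0]
    | succ i ih =>
      rw [hΦs]
      linarith [ho (Φ i U x) (f x (proj0 U)), hγ_nonneg (Φ i U x) (f x (proj0 U))]
  have hJΦ1 : ∀ i, 1 ≤ i → ∀ U x, J (Φ i U x) (f x (proj0 U)) ≤
      J (Ψtw U x) (f x (proj0 U)) - γ (Ψtw U x) (f x (proj0 U)) := by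
    intro i hi U x
    induction i, hi using Nat.le_induction with
    | base =>
      have := hΦs 0 U x
      rw [zero_add, hΦ0] at this
      rw [this]
      linarith [ho (Ψtw U x) (f x (proj0 U))]
    | succ i _ ih =>
      rw [hΦs]
      linarith [ho (Φ i U x) (f x (proj0 U)), hγ_nonneg (Φ i U x) (f x (proj0 U))]
  have hdec : ∀ (U : ℕ → EuclideanSpace ℝ (Fin (N * m))) (X : ℕ → EuclideanSpace ℝ (Fin n))
        (iT : ℕ → ℕ), (∀ k, U (k + 1) = Φ (iT k) (U k) (X k)) →
        (∀ k, X (k + 1) = f (X k) (proj0 (U k))) → Antitone (fun k => J (U k) (X k)) := by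
    intro U X iT hU hX
    refine antitone_nat_of_succ_le fun k => ?_
    have h1 := hJΦ (iT k) (U k) (X k)
    rw [← hU, ← hX] at h1
    have h2 := htw (U k) (X k)
    rw [← hX] at h2
    linarith [hl_nonneg (X k) (proj0 (U k))]
  -- sublevel sets are bounded
  have hsub : ∀ r : ℝ, 0 ≤ r → ∀ U x, J U x < α r → Real.sqrt (‖U‖ ^ 2 + ‖x‖ ^ 2) < r := by
    intro r hr U x h
    by_contra! hc
    have := hα_mono.monotoneOn (a := r) (b := Real.sqrt (‖U‖ ^ 2 + ‖x‖ ^ 2)) hr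
      (Real.sqrt_nonneg _) hc
    linarith [hJ_lb U x]
  have hnU : ∀ (U : EuclideanSpace ℝ (Fin (N * m))) (x : EuclideanSpace ℝ (Fin n)),
      ‖U‖ ≤ Real.sqrt (‖U‖ ^ 2 + ‖x‖ ^ 2) := fun U x =>
    Real.le_sqrt_of_sq_le (by nlinarith [sq_nonneg ‖x‖])
  have hnx : ∀ (U : EuclideanSpace ℝ (Fin (N * m))) (x : EuclideanSpace ℝ (Fin n)),
      ‖x‖ ≤ Real.sqrt (‖U‖ ^ 2 + ‖x‖ ^ 2) := fun U x =>
    Real.le_sqrt_of_sq_le (by nlinarith [sq_nonneg ‖U‖])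
  have hαpos : ∀ r : ℝ, 0 < r → 0 < α r := by
    intro r hr
    rw [← hα0]
    exact hα_mono (Set.mem_Ici.2 le_rfl) (Set.mem_Ici.2 hr.le) hr
  have hβ0c : Tendsto β (𝓝[Set.Ici 0] 0) (𝓝 0) := by
    have := hβ_cont 0 (Set.mem_Ici.2 le_rfl)
    rwa [ContinuousWithinAt, hβ0] at this
  refine ⟨?_, ?_⟩
  · intro ε hε
    have h1 : ∀ᶠ d in 𝓝[>] (0 : ℝ), β d < α ε :=
      (hβ0c.mono_left (nhdsWithin_mono _ Set.Ioi_subset_Ici_self)).eventually_lt_const (hαpos ε hε)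
    obtain ⟨δ, hδ, hδ0⟩ := (h1.and self_mem_nhdsWithin).exists
    refine ⟨δ, hδ0, ?_⟩
    intro U X iT _ hU hX h0 k
    refine (hsub ε hε.le _ _ ?_).le
    have h2 := hdec U X iT hU hX (Nat.zero_le k)
    have h3 := hβ_mono.monotoneOn (Set.mem_Ici.2 (Real.sqrt_nonneg _))
      (Set.mem_Ici.2 (le_of_lt hδ0)) h0
    have h4 := hJ_ub (U 0) (X 0)
    simp only at h2
    linarith
  · intro U X iT hi hU hX
    have hanti := hdec U X iT hU hX
    have hbdd : BddBelow (Set.range fun k => J (U k) (X k)) :=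
      ⟨0, by rintro _ ⟨k, rfl⟩; exact hJ_nonneg _ _⟩
    obtain ⟨c, hc⟩ : ∃ c, Tendsto (fun k => J (U k) (X k)) atTop (𝓝 c) :=
      ⟨_, tendsto_atTop_ciInf hanti hbdd⟩
    have hc1 : Tendsto (fun k => J (U (k+1)) (X (k+1))) atTop (𝓝 c) :=
      (tendsto_add_atTop_iff_nat (f := fun k => J (U k) (X k)) 1).2 hc
    have hstep : ∀ k, J (U (k+1)) (X (k+1)) ≤ J (Ψtw (U k) (X k)) (X (k+1))
        - γ (Ψtw (U k) (X k)) (X (k+1)) := by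
      intro k
      have h1 := hJΦ1 (iT k) (hi k) (U k) (X k)
      rwa [← hU, ← hX] at h1
    have htw' : ∀ k, J (Ψtw (U k) (X k)) (X (k+1)) ≤ J (U k) (X k) - l (X k) (proj0 (U k)) := by
      intro k
      have h2 := htw (U k) (X k)
      rw [← hX] at h2
      linarith
    have hdiff : Tendsto (fun k => J (U k) (X k) - J (U (k+1)) (X (k+1))) atTop (𝓝 0) := by
      simpa using hc.sub hc1
    have hl0 : Tendsto (fun k => l (X k) (proj0 (U k))) atTop (𝓝 0) :=
      squeeze_zero (fun k => hl_nonneg _ _)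
        (fun k => by linarith [hstep k, htw' k, hγ_nonneg (Ψtw (U k) (X k)) (X (k+1))]) hdiff
    have hl1 : Tendsto (fun k => l (X (k+1)) (proj0 (U (k+1)))) atTop (𝓝 0) :=
      (tendsto_add_atTop_iff_nat (f := fun k => l (X k) (proj0 (U k))) 1).2 hl0
    have hγ0 : Tendsto (fun k => γ (Ψtw (U k) (X k)) (X (k+1))) atTop (𝓝 0) :=
      squeeze_zero (fun k => hγ_nonneg _ _)
        (fun k => by linarith [hstep k, htw' k, hl_nonneg (X k) (proj0 (U k))]) hdiff
    obtain ⟨R, hR, hR0⟩ := ((hα_top.eventually_gt_atTop (J (U 0) (X 0))).and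
      (eventually_ge_atTop 0)).exists
    have hVle : ∀ k, J (U k) (X k) ≤ J (U 0) (X 0) := fun k => hanti (Nat.zero_le k)
    have hb1 : ∀ k, Real.sqrt (‖U k‖ ^ 2 + ‖X k‖ ^ 2) < R := fun k =>
      hsub R hR0 _ _ (lt_of_le_of_lt (hVle k) hR)
    have hb2 : ∀ k, Real.sqrt (‖Ψtw (U k) (X k)‖ ^ 2 + ‖X (k+1)‖ ^ 2) < R := fun k =>
      hsub R hR0 _ _ (by linarith [hVle k, htw' k, hl_nonneg (X k) (proj0 (U k))])
    have hcpt := ((isCompact_closedBall (0 : EuclideanSpace ℝ (Fin (N * m))) R).prod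
      ((isCompact_closedBall (0 : EuclideanSpace ℝ (Fin n)) R).prod
        (isCompact_closedBall (0 : EuclideanSpace ℝ (Fin (N * m))) R)))
    obtain ⟨⟨w, y, a⟩, -, φ, hφ, hlim⟩ := hcpt.tendsto_subseq
      (x := fun k => (Ψtw (U k) (X k), X (k+1), U (k+1))) (fun k => by
        refine ⟨?_, ?_, ?_⟩
        · rw [mem_closedBall_zero_iff]; exact (hnU _ _).trans (hb2 k).le
        · rw [mem_closedBall_zero_iff]; exact (hnx _ _).trans (hb2 k).le
        · rw [mem_closedBall_zero_iff]; exact (hnU _ _).trans (hb1 (k+1)).le)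
    have hw : Tendsto (fun j => Ψtw (U (φ j)) (X (φ j))) atTop (𝓝 w) :=
      (continuous_fst.tendsto (w, y, a)).comp hlim
    have hy : Tendsto (fun j => X (φ j + 1)) atTop (𝓝 y) :=
      ((continuous_fst.comp continuous_snd).tendsto (w, y, a)).comp hlim
    have ha : Tendsto (fun j => U (φ j + 1)) atTop (𝓝 a) :=
      ((continuous_snd.comp continuous_snd).tendsto (w, y, a)).comp hlim
    have hpc : Continuous proj0 := by
      have : proj0 = fun U => WithLp.toLp 2
          (fun i => U (Fin.castLE (Nat.le_mul_of_pos_left m hN) i)) := by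
        funext U
        ext i
        exact hproj0 U i
      rw [this]
      fun_prop
    have hly : l y (proj0 a) = 0 := tendsto_nhds_unique
      ((hl_cont.tendsto (y, proj0 a)).comp (hy.prodMk_nhds ((hpc.tendsto a).comp ha)))
      (hl1.comp hφ.tendsto_atTop)
    obtain ⟨rfl, -⟩ := (hl_pd _ _).1 hly
    have hγw : γ w 0 = 0 := tendsto_nhds_unique
      ((hγ_cont.tendsto (w, 0)).comp (hw.prodMk_nhds hy)) (hγ0.comp hφ.tendsto_atTop)
    have hJw : J w 0 ≤ 0 := by
      rw [(hγ_zero _ _).1 hγw]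
      refine ((hJstar 0).1 ⟨0, rfl⟩).trans ((hJ_ub 0 0).trans ?_)
      simp [hβ0]
    have hw0 : w = 0 := by
      by_contra hne
      have h1 := hsub ‖w‖ (norm_nonneg _) w 0 (lt_of_le_of_lt hJw (hαpos _ (norm_pos_iff.2 hne)))
      linarith [hnU w (0 : EuclideanSpace ℝ (Fin n))]
    subst hw0
    have hs : Tendsto (fun j => Real.sqrt (‖Ψtw (U (φ j)) (X (φ j))‖ ^ 2 + ‖X (φ j + 1)‖ ^ 2))
        atTop (𝓝 0) := by
      have := ((hw.norm.pow 2).add (hy.norm.pow 2)).sqrt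
      simpa using this
    have hβs := hβ0c.comp (tendsto_nhdsWithin_iff.2
      ⟨hs, Eventually.of_forall fun j => Set.mem_Ici.2 (Real.sqrt_nonneg _)⟩)
    have hcle : c ≤ 0 := le_of_tendsto_of_tendsto' (hc1.comp hφ.tendsto_atTop) hβs (fun j => by
      have h1 := hstep (φ j)
      have h2 := hγ_nonneg (Ψtw (U (φ j)) (X (φ j))) (X (φ j + 1))
      have h3 := hJ_ub (Ψtw (U (φ j)) (X (φ j))) (X (φ j + 1))
      simp only [Function.comp]
      linarith)
    have hfin : Tendsto (fun k => Real.sqrt (‖U k‖ ^ 2 + ‖X k‖ ^ 2)) atTop (𝓝 0) := by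
      rw [Metric.tendsto_atTop']
      intro ε hε
      obtain ⟨K, hK⟩ := (hc.eventually_lt_const (lt_of_le_of_lt hcle (hαpos ε hε))).exists_forall_of_atTop
      refine ⟨K, fun k hk => ?_⟩
      rw [Real.dist_eq, sub_zero, abs_of_nonneg (Real.sqrt_nonneg _)]
      exact hsub ε hε.le _ _ (hK k hk.le)
    exact (squeeze_zero_norm (fun k => hnU _ _) hfin).prodMk_nhds
      (squeeze_zero_norm (fun k => hnx _ _) hfin)
end

section
/- Consider the anytime real-time MPC dynamics modified by an arbitrary learning-based warm start with min-selection: at each step k, let ξ_k = f(x(k),Π₀U(k)), let W(k) ∈ ℝ^{Nm} be any vector satisfying J_N(W(k), ξ_k) ≤ J_N(Ψ_tw(U(k),x(k)), ξ_k), and set U(k+1) = Ψ_o^{i_T(k)}(W(k), ξ_k) (i.e. Ψ_o iterated i_T(k) ≥ 1 times with second argument ξ_k), x(k+1) = ξ_k. Assume: (a) the stage cost l : ℝⁿ×ℝᵐ → ℝ≥0 is continuous and positive definite (l(x,u) = 0 iff (x,u) = (0,0)); (b) there exist class-K∞ functions α̲, ᾱ with α̲(‖(U,x)‖) ≤ J_N(U,x)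 ≤ ᾱ(‖(U,x)‖) for all (U,x); (c) J_N(Ψ_tw(U,x), f(x,Π₀U)) − J_N(U,x) ≤ −l(x,Π₀U) for all (U,x); (d) there is a continuous γ : ℝ^{Nm}×ℝⁿ → ℝ≥0 with γ(U,x) = 0 iff J_N(U,x) = J_N^*(x), such that J_N(Ψ_o(U,x),x) − J_N(U,x) ≤ −γ(U,x) for all (U,x). Then the origin (U,x) = (0,0) is globally asymptotically stable for this modified closed loop: for every ε > 0 there is δ > 0 such that ‖(U(0),x(0))‖ ≤ δ implies ‖(U(k),x(k))‖ ≤ ε for all k, and every closed-loop trajectory satisfies (U(k),x(k)) → (0,0). In particular, stability holds for every choice of the spatial warm start operator. -/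
open Filter Topology

/-- Global asymptotic stability of the origin for the anytime
real-time MPC dynamics with an arbitrary learning-based warm start under
min-selection: at each step any warm start `W k` whose cost at
`ξ k = f(x k, Π₀ U k)` does not exceed that of the temporal warm start may be
used, followed by `i_T k ≥ 1` optimizer iterations. Stability holds for every
choice of the spatial warm start operator. -/
theorem stmt_1 (n m N : ℕ) (hn : 0 < n) (hm : 0 < m) (hN : 0 < N)
    (f : EuclideanSpace ℝ (Fin n) → EuclideanSpace ℝ (Fin m) → EuclideanSpace ℝ (Fin n))
    (l : EuclideanSpace ℝ (Fin n) → EuclideanSpace ℝ (Fin m) → ℝ)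
    (J : EuclideanSpace ℝ (Fin (N * m)) → EuclideanSpace ℝ (Fin n) → ℝ)
    (Jstar : EuclideanSpace ℝ (Fin n) → ℝ)
    (Ψtw Ψo : EuclideanSpace ℝ (Fin (N * m)) → EuclideanSpace ℝ (Fin n) →
      EuclideanSpace ℝ (Fin (N * m)))
    (γ : EuclideanSpace ℝ (Fin (N * m)) → EuclideanSpace ℝ (Fin n) → ℝ)
    (proj0 : EuclideanSpace ℝ (Fin (N * m)) → EuclideanSpace ℝ (Fin m))
    (hproj0 : ∀ U i, proj0 U i = U (Fin.castLE (Nat.le_mul_of_pos_left m hN) i))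
    -- (a) the stage cost is continuous, nonnegative and positive definite
    (hl_cont : Continuous fun p : EuclideanSpace ℝ (Fin n) × EuclideanSpace ℝ (Fin m) =>
      l p.1 p.2)
    (hl_nonneg : ∀ x u, 0 ≤ l x u)
    (hl_pd : ∀ x u, l x u = 0 ↔ x = 0 ∧ u = 0)
    -- (b) class-K∞ upper and lower bounds on the cost
    (α β : ℝ → ℝ)
    (hα_cont : ContinuousOn α (Set.Ici 0)) (hα_mono : StrictMonoOn α (Set.Ici 0))
    (hα0 : α 0 = 0) (hα_top : Tendsto α atTop atTop)
    (hβ_cont : ContinuousOn β (Set.Ici 0)) (hβ_mono : StrictMonoOn β (Set.Ici 0))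
    (hβ0 : β 0 = 0) (hβ_top : Tendsto β atTop atTop)
    (hJ_lb : ∀ U x, α (Real.sqrt (‖U‖ ^ 2 + ‖x‖ ^ 2)) ≤ J U x)
    (hJ_ub : ∀ U x, J U x ≤ β (Real.sqrt (‖U‖ ^ 2 + ‖x‖ ^ 2)))
    (hJ_nonneg : ∀ U x, 0 ≤ J U x)
    -- value function
    (hJstar : ∀ x, IsGLB (Set.range fun U => J U x) (Jstar x))
    -- (c) decrease of the temporal warm start
    (htw : ∀ U x, J (Ψtw U x) (f x (proj0 U)) - J U x ≤ -l x (proj0 U))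
    -- (d) decrease of the optimization update operator
    (hγ_cont : Continuous fun p : EuclideanSpace ℝ (Fin (N * m)) × EuclideanSpace ℝ (Fin n) =>
      γ p.1 p.2)
    (hγ_nonneg : ∀ U x, 0 ≤ γ U x)
    (hγ_zero : ∀ U x, γ U x = 0 ↔ J U x = Jstar x)
    (ho : ∀ U x, J (Ψo U x) x - J U x ≤ -γ U x) :
    -- stability
    (∀ ε > (0 : ℝ), ∃ δ > (0 : ℝ),
      ∀ (U W : ℕ → EuclideanSpace ℝ (Fin (N * m))) (X : ℕ → EuclideanSpace ℝ (Fin n))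
        (iT : ℕ → ℕ), (∀ k, 1 ≤ iT k) →
        (∀ k, J (W k) (f (X k) (proj0 (U k))) ≤
          J (Ψtw (U k) (X k)) (f (X k) (proj0 (U k)))) →
        (∀ k, U (k + 1) = (fun V => Ψo V (f (X k) (proj0 (U k))))^[iT k] (W k)) →
        (∀ k, X (k + 1) = f (X k) (proj0 (U k))) →
        Real.sqrt (‖U 0‖ ^ 2 + ‖X 0‖ ^ 2) ≤ δ →
        ∀ k, Real.sqrt (‖U k‖ ^ 2 + ‖X k‖ ^ 2) ≤ ε) ∧
    -- global attractivity
    (∀ (U W : ℕ → EuclideanSpace ℝ (Fin (N * m))) (X : ℕ → EuclideanSpace ℝ (Fin n))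
      (iT : ℕ → ℕ), (∀ k, 1 ≤ iT k) →
      (∀ k, J (W k) (f (X k) (proj0 (U k))) ≤
        J (Ψtw (U k) (X k)) (f (X k) (proj0 (U k)))) →
      (∀ k, U (k + 1) = (fun V => Ψo V (f (X k) (proj0 (U k))))^[iT k] (W k)) →
      (∀ k, X (k + 1) = f (X k) (proj0 (U k))) →
      Tendsto (fun k => (U k, X k)) atTop (𝓝 (0, 0))) := by
  have hs0 : ∀ (V : EuclideanSpace ℝ (Fin (N * m))) (x : EuclideanSpace ℝ (Fin n)),
      0 ≤ Real.sqrt (‖V‖ ^ 2 + ‖x‖ ^ 2) := fun V x => Real.sqrt_nonneg _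
  -- iterates of the optimizer do not increase the cost
  have hiter : ∀ (x : EuclideanSpace ℝ (Fin n)) (j : ℕ) (V : EuclideanSpace ℝ (Fin (N * m))),
      J ((fun V => Ψo V x)^[j] V) x ≤ J V x := by
    intro x j
    induction j with
    | zero => intro V; simp
    | succ j ih =>
      intro V
      rw [Function.iterate_succ_apply]
      have h1 := ih (Ψo V x)
      have h2 := ho V x
      have h3 := hγ_nonneg V x
      linarith
  -- one-step estimates along trajectories
  have hstep : ∀ (U W : ℕ → EuclideanSpace ℝ (Fin (N * m)))
      (X : ℕ → EuclideanSpace ℝ (Fin n)) (iT : ℕ → ℕ), (∀ k, 1 ≤ iT k) →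
      (∀ k, J (W k) (f (X k) (proj0 (U k))) ≤
        J (Ψtw (U k) (X k)) (f (X k) (proj0 (U k)))) →
      (∀ k, U (k + 1) = (fun V => Ψo V (f (X k) (proj0 (U k))))^[iT k] (W k)) →
      (∀ k, X (k + 1) = f (X k) (proj0 (U k))) →
      ∀ k, J (W k) (X (k + 1)) ≤ J (U k) (X k) - l (X k) (proj0 (U k)) ∧
        J (U (k + 1)) (X (k + 1)) ≤ J (W k) (X (k + 1)) - γ (W k) (X (k + 1)) := by
    intro U W X iT hi hW hU hX k
    constructor
    · rw [hX k]
      have h1 := hW k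
      have h2 := htw (U k) (X k)
      linarith
    · rw [hU k, hX k]
      obtain ⟨j, hj⟩ : ∃ j, iT k = j + 1 := ⟨iT k - 1, by have := hi k; omega⟩
      rw [hj, Function.iterate_succ_apply]
      have h1 := hiter (f (X k) (proj0 (U k))) j (Ψo (W k) (f (X k) (proj0 (U k))))
      have h2 := ho (W k) (f (X k) (proj0 (U k)))
      linarith
  -- small cost implies small norm
  have hsmall : ∀ ε > (0 : ℝ), 0 < α ε ∧ ∀ V x, J V x < α ε →
      Real.sqrt (‖V‖ ^ 2 + ‖x‖ ^ 2) < ε := by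
    intro ε hε
    refine ⟨?_, ?_⟩
    · have := hα_mono (Set.mem_Ici.2 le_rfl) (Set.mem_Ici.2 hε.le) hε
      rwa [hα0] at this
    · intro V x h
      by_contra hc
      push Not at hc
      have h1 := hα_mono.monotoneOn (Set.mem_Ici.2 hε.le) (Set.mem_Ici.2 (hs0 V x)) hc
      have h2 := hJ_lb V x
      linarith
  have hβ_tend : Tendsto β (𝓝[Set.Ici 0] 0) (𝓝 0) := by
    have := hβ_cont 0 (Set.mem_Ici.2 le_rfl)
    unfold ContinuousWithinAt at this
    rwa [hβ0] at this
  refine ⟨?_, ?_⟩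
  · intro ε hε
    obtain ⟨hαε, hsm⟩ := hsmall ε hε
    have h1 : ∀ᶠ s in 𝓝[Set.Ici 0] (0 : ℝ), β s < α ε := hβ_tend.eventually_lt_const hαε
    rw [eventually_nhdsWithin_iff, Metric.eventually_nhds_iff] at h1
    obtain ⟨δ, hδ, hball⟩ := h1
    refine ⟨δ / 2, by positivity, ?_⟩
    intro U W X iT hi hW hU hX h0 k
    have hst := hstep U W X iT hi hW hU hX
    have hV : ∀ k, J (U k) (X k) < α ε := by
      intro k
      induction k with
      | zero =>
        refine lt_of_le_of_lt (hJ_ub _ _) (hball ?_ (hs0 _ _))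
        rw [Real.dist_eq, sub_zero, abs_of_nonneg (hs0 _ _)]
        linarith
      | succ k ih =>
        have h2 := hst k
        have h3 := hl_nonneg (X k) (proj0 (U k))
        have h4 := hγ_nonneg (W k) (X (k + 1))
        linarith [h2.1, h2.2]
    exact (hsm _ _ (hV k)).le
  · intro U W X iT hi hW hU hX
    have hst := hstep U W X iT hi hW hU hX
    have hl' := fun k => hl_nonneg (X k) (proj0 (U k))
    have hγ' := fun k => hγ_nonneg (W k) (X (k + 1))
    have hanti : Antitone fun k => J (U k) (X k) :=
      antitone_nat_of_succ_le fun k => by linarith [(hst k).1, (hst k).2, hl' k, hγ' k]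
    obtain ⟨L, hL⟩ : ∃ L, Tendsto (fun k => J (U k) (X k)) atTop (𝓝 L) :=
      ⟨_, tendsto_atTop_ciInf hanti ⟨0, by rintro _ ⟨k, rfl⟩; exact hJ_nonneg _ _⟩⟩
    have hdiff : Tendsto (fun k => J (U k) (X k) - J (U (k + 1)) (X (k + 1))) atTop (𝓝 0) := by
      simpa using hL.sub ((tendsto_add_atTop_iff_nat 1).2 hL)
    have hlt : Tendsto (fun k => l (X k) (proj0 (U k))) atTop (𝓝 0) :=
      squeeze_zero hl' (fun k => by linarith [(hst k).1, (hst k).2, hγ' k]) hdiff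
    have hγt : Tendsto (fun k => γ (W k) (X (k + 1))) atTop (𝓝 0) :=
      squeeze_zero hγ' (fun k => by linarith [(hst k).1, (hst k).2, hl' k]) hdiff
    -- boundedness
    obtain ⟨R, hR⟩ := (hα_top.eventually_gt_atTop (J (U 0) (X 0))).exists_forall_of_atTop
    have hbd : ∀ V x, J V x ≤ J (U 0) (X 0) → ‖V‖ ≤ R ∧ ‖x‖ ≤ R := by
      intro V x h
      have h1 : Real.sqrt (‖V‖ ^ 2 + ‖x‖ ^ 2) ≤ R := by
        by_contra hc
        push Not at hc
        have h2 := hR _ hc.le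
        have h3 := hJ_lb V x
        linarith
      exact ⟨(Real.le_sqrt_of_sq_le (by nlinarith [sq_nonneg ‖x‖])).trans h1,
        (Real.le_sqrt_of_sq_le (by nlinarith [sq_nonneg ‖V‖])).trans h1⟩
    have hV0 : ∀ k, J (U k) (X k) ≤ J (U 0) (X 0) := fun k => hanti (Nat.zero_le k)
    have hmem : ∀ k, ((W k, X (k + 1)), U (k + 1)) ∈ Metric.closedBall
        (0 : (EuclideanSpace ℝ (Fin (N * m)) × EuclideanSpace ℝ (Fin n)) ×
          EuclideanSpace ℝ (Fin (N * m))) R := by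
      intro k
      have h1 := hbd (W k) (X (k + 1)) (by linarith [(hst k).1, hl' k, hV0 k])
      have h2 := hbd (U (k + 1)) (X (k + 1)) (hV0 _)
      rw [mem_closedBall_zero_iff]
      simp only [Prod.norm_def, sup_le_iff]
      exact ⟨⟨h1.1, h1.2⟩, h2.1⟩
    obtain ⟨⟨⟨w, x⟩, u⟩, -, φ, hφ, hlim⟩ := (isCompact_closedBall _ R).tendsto_subseq hmem
    have hφt := hφ.tendsto_atTop
    have hw : Tendsto (fun k => W (φ k)) atTop (𝓝 w) := hlim.fst_nhds.fst_nhds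
    have hx : Tendsto (fun k => X (φ k + 1)) atTop (𝓝 x) := hlim.fst_nhds.snd_nhds
    have hu : Tendsto (fun k => U (φ k + 1)) atTop (𝓝 u) := hlim.snd_nhds
    have hproj_cont : Continuous proj0 := by
      have : proj0 = fun V => WithLp.toLp 2
          (fun i => V (Fin.castLE (Nat.le_mul_of_pos_left m hN) i)) := by
        funext V
        ext i
        simp [hproj0]
      rw [this]
      fun_prop
    have hx0 : x = 0 := by
      have h1 : Tendsto (fun k => l (X (φ k + 1)) (proj0 (U (φ k + 1)))) atTop
          (𝓝 (l x (proj0 u))) :=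
        (hl_cont.tendsto (x, proj0 u)).comp (hx.prodMk_nhds ((hproj_cont.tendsto u).comp hu))
      have h2 := (((tendsto_add_atTop_iff_nat 1).2 hlt)).comp hφt
      exact ((hl_pd _ _).1 (tendsto_nhds_unique h1 h2)).1
    subst hx0
    have hJ00 : J 0 0 ≤ 0 := by
      have := hJ_ub 0 0
      simpa [hβ0] using this
    have hw0 : w = 0 := by
      have h1 : Tendsto (fun k => γ (W (φ k)) (X (φ k + 1))) atTop (𝓝 (γ w 0)) :=
        (hγ_cont.tendsto (w, 0)).comp (hw.prodMk_nhds hx)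
      have h2 := hγt.comp hφt
      have h3 := (hγ_zero _ _).1 (tendsto_nhds_unique h1 h2)
      have h4 : Jstar 0 ≤ J 0 0 := (hJstar 0).1 ⟨0, rfl⟩
      by_contra hne
      have hpos : 0 < ‖w‖ := norm_pos_iff.2 hne
      have h5 := (hsmall ‖w‖ hpos).2 w 0 (by linarith [(hsmall ‖w‖ hpos).1])
      simp at h5
    subst hw0
    have hst0 : Tendsto (fun k => Real.sqrt (‖W (φ k)‖ ^ 2 + ‖X (φ k + 1)‖ ^ 2)) atTop (𝓝 0) := by
      have := (((hw.norm).pow 2).add ((hx.norm).pow 2)).sqrt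
      simpa using this
    have hβt : Tendsto (fun k => β (Real.sqrt (‖W (φ k)‖ ^ 2 + ‖X (φ k + 1)‖ ^ 2))) atTop (𝓝 0) :=
      hβ_tend.comp (tendsto_nhdsWithin_iff.2 ⟨hst0, Eventually.of_forall fun k => hs0 _ _⟩)
    have hVsub : Tendsto (fun k => J (U (φ k + 1)) (X (φ k + 1))) atTop (𝓝 0) :=
      squeeze_zero (fun k => hJ_nonneg _ _)
        (fun k => by linarith [(hst (φ k)).2, hγ' (φ k), hJ_ub (W (φ k)) (X (φ k + 1))]) hβt
    have hL0 : L = 0 :=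
      tendsto_nhds_unique (((tendsto_add_atTop_iff_nat 1).2 hL).comp hφt) hVsub
    subst hL0
    rw [Metric.tendsto_nhds]
    intro ε hε
    obtain ⟨hαε, hsm⟩ := hsmall ε hε
    filter_upwards [hL.eventually_lt_const hαε] with k hk
    have h1 := hsm _ _ hk
    rw [Prod.dist_eq, dist_zero_right, dist_zero_right]
    exact max_lt
      ((Real.le_sqrt_of_sq_le (by nlinarith [sq_nonneg ‖X k‖])).trans_lt h1)
      ((Real.le_sqrt_of_sq_le (by nlinarith [sq_nonneg ‖U k‖])).trans_lt h1)
end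

section
/- Consider the real-time MPC closed loop with convex-hull-based learning. Assume: (a) J_N : ℝ^{Nm}×ℝⁿ → ℝ is convex jointly in (U,x); (b) there is a continuous γ : ℝ^{Nm}×ℝⁿ → ℝ≥0 with γ(U,x) = 0 if and only if J_N(U,x) = J_N^*(x), such that J_N(Ψ_o(U,x),x) − J_N(U,x) ≤ −γ(U,x) for all (U,x); (c) the sequences (U(k),x(k)), the warm starts W(k), and the points ξ_k all remain in a fixed compact set. Then for every ω-limit point x of the sequence (ξ_k) such that x ∈ interior(conv D_x(k₀)) for some k₀ ∈ ℕ, one has lim_{k→∞} J_N(Ψ_sw(x, D(k)), x) = J_N^*(x); i.e. the spatial warm start asymptotically attains the value function at x. -/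
open Filter Topology

/-- Convergence of the convex-hull-based learning scheme
(Theorem 3 of the paper): along the real-time MPC closed loop with data sets
`D k`, convex-hull spatial warm start `Ψsw` and min-selection of warm starts,
at every ω-limit point `x` of the sequence `ξ k = f(x k, Π₀ U k)` that lies in
the interior of `conv D_x(k₀)` for some `k₀`, the cost of the spatial warm
start converges to the value `J_N^*(x)`. -/
theorem stmt_6 (n m N : ℕ) (hn : 0 < n) (hm : 0 < m) (hN : 0 < N)
    (f : EuclideanSpace ℝ (Fin n) → EuclideanSpace ℝ (Fin m) → EuclideanSpace ℝ (Fin n))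
    (J : EuclideanSpace ℝ (Fin (N * m)) → EuclideanSpace ℝ (Fin n) → ℝ)
    (Jstar : EuclideanSpace ℝ (Fin n) → ℝ)
    (Ψtw Ψo : EuclideanSpace ℝ (Fin (N * m)) → EuclideanSpace ℝ (Fin n) →
      EuclideanSpace ℝ (Fin (N * m)))
    (γ : EuclideanSpace ℝ (Fin (N * m)) → EuclideanSpace ℝ (Fin n) → ℝ)
    (proj0 : EuclideanSpace ℝ (Fin (N * m)) → EuclideanSpace ℝ (Fin m))
    (hproj0 : ∀ U i, proj0 U i = U (Fin.castLE (Nat.le_mul_of_pos_left m hN) i))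
    -- (a) joint convexity of the cost
    (hJconv : ConvexOn ℝ Set.univ
      (fun p : EuclideanSpace ℝ (Fin (N * m)) × EuclideanSpace ℝ (Fin n) => J p.1 p.2))
    -- value function
    (hJstar : ∀ x, IsGLB (Set.range fun U => J U x) (Jstar x))
    -- (b) decrease of the optimization update operator
    (hγ_cont : Continuous fun p : EuclideanSpace ℝ (Fin (N * m)) × EuclideanSpace ℝ (Fin n) =>
      γ p.1 p.2)
    (hγ_nonneg : ∀ U x, 0 ≤ γ U x)
    (hγ_zero : ∀ U x, γ U x = 0 ↔ J U x = Jstar x)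
    (ho : ∀ U x, J (Ψo U x) x - J U x ≤ -γ U x)
    -- data sets, spatial warm start, and closed loop
    (D : ℕ → Set ((EuclideanSpace ℝ (Fin (N * m)) × EuclideanSpace ℝ (Fin n)) × ℝ))
    (Dx : ℕ → Set (EuclideanSpace ℝ (Fin n)))
    (hDx : ∀ k, Dx k = (fun p : (EuclideanSpace ℝ (Fin (N * m)) ×
      EuclideanSpace ℝ (Fin n)) × ℝ => p.1.2) '' D k)
    (Ψsw : EuclideanSpace ℝ (Fin n) → ℕ → EuclideanSpace ℝ (Fin (N * m)))
    (Ja : EuclideanSpace ℝ (Fin n) → ℕ → ℝ)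
    (hsw_mem : ∀ k xbar, xbar ∈ convexHull ℝ (Dx k) →
      ((Ψsw xbar k, xbar), Ja xbar k) ∈ convexHull ℝ (D k))
    (hsw_min : ∀ k xbar, xbar ∈ convexHull ℝ (Dx k) →
      ∀ (V : EuclideanSpace ℝ (Fin (N * m))) (c : ℝ),
        ((V, xbar), c) ∈ convexHull ℝ (D k) → Ja xbar k ≤ c)
    (U W : ℕ → EuclideanSpace ℝ (Fin (N * m)))
    (X ξ : ℕ → EuclideanSpace ℝ (Fin n))
    (w : ℕ → EuclideanSpace ℝ (Fin n))
    (iT : ℕ → ℕ) (hiT : ∀ k, 1 ≤ iT k)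
    (hξ : ∀ k, ξ k = f (X k) (proj0 (U k)))
    (hW_t : ∀ k, (ξ k ∉ convexHull ℝ (Dx k) ∨
        J (Ψtw (U k) (X k)) (ξ k) < J (Ψsw (ξ k) k) (ξ k)) →
      W k = Ψtw (U k) (X k))
    (hW_s : ∀ k, ξ k ∈ convexHull ℝ (Dx k) →
      ¬ J (Ψtw (U k) (X k)) (ξ k) < J (Ψsw (ξ k) k) (ξ k) →
      W k = Ψsw (ξ k) k)
    (hU : ∀ k, U (k + 1) = (fun V => Ψo V (ξ k))^[iT k] (W k))
    (hX : ∀ k, X (k + 1) = ξ k + w k)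
    (hD : ∀ k, D (k + 1) = D k ∪ {((U (k + 1), ξ k), J (U (k + 1)) (ξ k))})
    (hD0fin : (D 0).Finite)
    (hD0 : ∀ p ∈ D 0, p.2 = J p.1.1 p.1.2)
    -- (c) compactness of the closed-loop data
    (K : Set (EuclideanSpace ℝ (Fin (N * m)) × EuclideanSpace ℝ (Fin n)))
    (hK : IsCompact K)
    (hcomp : ∀ k, (U k, X k) ∈ K ∧ (W k, ξ k) ∈ K) :
    ∀ x : EuclideanSpace ℝ (Fin n),
      (∃ φ : ℕ → ℕ, StrictMono φ ∧ Tendsto (fun i => ξ (φ i)) atTop (𝓝 x)) →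
      (∃ k₀ : ℕ, x ∈ interior (convexHull ℝ (Dx k₀))) →
      Tendsto (fun k => J (Ψsw x k) x) atTop (𝓝 (Jstar x)) := by
  intro x ⟨φ, hφ, hφx⟩ ⟨k₀, hk₀⟩
  -- continuity of the cost
  have hJc : Continuous (fun p : EuclideanSpace ℝ (Fin (N * m)) × EuclideanSpace ℝ (Fin n) =>
      J p.1 p.2) := by
    have := hJconv.continuousOn isOpen_univ
    exact continuousOn_univ.mp this
  -- monotonicity
  have hDmono : Monotone D := monotone_nat_of_le_succ (fun k => by
    rw [hD k]; exact Set.subset_union_left)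
  have hDxmono : ∀ j k, j ≤ k → convexHull ℝ (Dx j) ⊆ convexHull ℝ (Dx k) := by
    intro j k h
    rw [hDx j, hDx k]
    exact convexHull_mono (Set.image_mono (hDmono h))
  have hDJ : ∀ k, ∀ p ∈ D k, p.2 = J p.1.1 p.1.2 := by
    intro k
    induction k with
    | zero => exact hD0
    | succ k ih =>
      intro p hp
      rw [hD k] at hp
      rcases hp with hp | hp
      · exact ih p hp
      · rw [Set.mem_singleton_iff.mp hp]
  have hJen : ∀ k, ∀ p ∈ convexHull ℝ (D k), J p.1.1 p.1.2 ≤ p.2 := by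
    intro k p hp
    have hsub : convexHull ℝ (D k) ⊆
        {p : (EuclideanSpace ℝ (Fin (N * m)) × EuclideanSpace ℝ (Fin n)) × ℝ |
          p.1 ∈ Set.univ ∧ J p.1.1 p.1.2 ≤ p.2} := by
      apply convexHull_min
      · intro q hq
        exact ⟨Set.mem_univ _, (hDJ k q hq).ge⟩
      · exact hJconv.convex_epigraph
    exact (hsub hp).2
  have hstarle : ∀ V y, Jstar y ≤ J V y := fun V y => (hJstar y).1 ⟨V, rfl⟩
  have hswJa : ∀ k y, y ∈ convexHull ℝ (Dx k) → J (Ψsw y k) y ≤ Ja y k := fun k y hy =>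
    hJen k _ (hsw_mem k y hy)
  have hJamono : ∀ j k y, j ≤ k → y ∈ convexHull ℝ (Dx j) → Ja y k ≤ Ja y j := by
    intro j k y hjk hy
    exact hsw_min k y (hDxmono j k hjk hy) _ _ (convexHull_mono (hDmono hjk) (hsw_mem j y hy))
  have hJaconv : ∀ k, ConvexOn ℝ (convexHull ℝ (Dx k)) (fun y => Ja y k) := by
    intro k
    refine ⟨convex_convexHull ℝ _, ?_⟩
    intro y hy z hz a b ha hb hab
    have h := convex_convexHull ℝ (D k) (hsw_mem k y hy) (hsw_mem k z hz) ha hb hab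
    exact hsw_min k _ (convex_convexHull ℝ _ hy hz ha hb hab) _ _ h
  -- a good ball
  have hcont : ContinuousAt (fun y => Ja y k₀) x :=
    (((hJaconv k₀).subset interior_subset (convex_convexHull ℝ _).interior).continuousOn
      isOpen_interior).continuousAt (isOpen_interior.mem_nhds hk₀)
  obtain ⟨r, hr, hball⟩ := Metric.mem_nhds_iff.mp
    (Filter.inter_mem (mem_interior_iff_mem_nhds.mp hk₀)
      (hcont.eventually_lt_const (lt_add_one (Ja x k₀))))
  set C : ℝ := Ja x k₀ + 1 with hC
  have hballD : ∀ k, k₀ ≤ k → Metric.ball x r ⊆ convexHull ℝ (Dx k) := fun k hk y hy =>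
    hDxmono k₀ k hk (hball hy).1
  have hup : ∀ k, k₀ ≤ k → ∀ y ∈ Metric.ball x r, Ja y k ≤ C := fun k hk y hy =>
    (hJamono k₀ k y hk (hball hy).1).trans (le_of_lt (hball hy).2)
  have hxb : x ∈ Metric.ball x r := Metric.mem_ball_self hr
  have hlowx : ∀ k, k₀ ≤ k → Jstar x ≤ Ja x k := fun k hk =>
    (hstarle _ _).trans (hswJa k x (hballD k hk hxb))
  have hlow : ∀ k, k₀ ≤ k → ∀ y ∈ Metric.ball x r, 2 * Jstar x - C ≤ Ja y k := by
    intro k hk y hy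
    have hz : (2 : ℝ) • x - y ∈ Metric.ball x r := by
      rw [Metric.mem_ball, dist_eq_norm] at hy ⊢
      have : (2 : ℝ) • x - y - x = -(y - x) := by module
      rwa [this, norm_neg]
    have h := (hJaconv k).2 (hballD k hk hy) (hballD k hk hz)
      (by norm_num : (0 : ℝ) ≤ 1 / 2) (by norm_num : (0 : ℝ) ≤ 1 / 2) (by norm_num)
    have e : (1 / 2 : ℝ) • y + (1 / 2 : ℝ) • ((2 : ℝ) • x - y) = x := by module
    simp only [e, smul_eq_mul] at h
    have h1 := hlowx k hk
    have h2 := hup k hk _ hz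
    linarith
  set M : ℝ := |C| + 2 * |Jstar x| with hM
  have hlip : ∃ L : NNReal, ∀ k, k₀ ≤ k →
      LipschitzOnWith L (fun y => Ja y k) (Metric.ball x (r - r / 2)) := by
    refine ⟨_, fun k hk => ConvexOn.lipschitzOnWith_of_abs_le (M := M)
      ((hJaconv k).subset (hballD k hk) (convex_ball x r)) (half_pos hr) ?_⟩
    intro y hy
    have h1 := hup k hk y hy
    have h2 := hlow k hk y hy
    rw [abs_le]
    constructor
    · linarith [le_abs_self C, neg_abs_le (Jstar x)]
    · linarith [le_abs_self C, abs_nonneg (Jstar x)]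
  obtain ⟨L, hL⟩ := hlip
  have hLd : ∀ k, k₀ ≤ k → ∀ y ∈ Metric.ball x (r - r / 2), |Ja y k - Ja x k| ≤ L * dist y x := by
    intro k hk y hy
    have := (hL k hk).dist_le_mul y hy x (Metric.mem_ball_self (by linarith))
    rwa [Real.dist_eq] at this
  -- decrease
  have hiter : ∀ y V i, J ((fun V => Ψo V y)^[i] V) y ≤ J V y := by
    intro y V i
    induction i with
    | zero => exact le_rfl
    | succ i ih =>
      rw [Function.iterate_succ_apply']
      have h1 := ho ((fun V => Ψo V y)^[i] V) y
      have h2 := hγ_nonneg ((fun V => Ψo V y)^[i] V) y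
      linarith
  have hdec : ∀ k, J (U (k + 1)) (ξ k) ≤ J (W k) (ξ k) - γ (W k) (ξ k) := by
    intro k
    obtain ⟨i, hi⟩ := Nat.exists_eq_add_of_le' (hiT k)
    rw [hU k, hi, Function.iterate_succ_apply]
    have h1 := hiter (ξ k) (Ψo (W k) (ξ k)) i
    have h2 := ho (W k) (ξ k)
    linarith
  have hWle : ∀ k, ξ k ∈ convexHull ℝ (Dx k) → J (W k) (ξ k) ≤ Ja (ξ k) k := by
    intro k hk
    have h0 := hswJa k _ hk
    by_cases h : J (Ψtw (U k) (X k)) (ξ k) < J (Ψsw (ξ k) k) (ξ k)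
    · rw [hW_t k (Or.inr h)]; linarith
    · rw [hW_s k hk h]; exact h0
  have hJaU : ∀ k, ξ k ∈ convexHull ℝ (Dx k) → Ja (ξ k) (k + 1) ≤ J (U (k + 1)) (ξ k) := by
    intro k hk
    refine hsw_min (k + 1) (ξ k) (hDxmono k _ (Nat.le_succ k) hk) (U (k + 1)) _
      (subset_convexHull ℝ _ ?_)
    rw [hD k]
    exact Or.inr rfl
  -- convergence of Ja x k
  have hconv : ∃ l, Tendsto (fun k => Ja x (k + k₀)) atTop (𝓝 l) := by
    refine ⟨_, tendsto_atTop_ciInf ?_ ⟨Jstar x, ?_⟩⟩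
    · intro i j hij
      exact hJamono _ _ x (by omega) (hballD _ (by omega) hxb)
    · rintro _ ⟨i, rfl⟩
      exact hlowx _ (by omega)
  obtain ⟨l, hl⟩ := hconv
  have hl : Tendsto (fun k => Ja x k) atTop (𝓝 l) := (tendsto_add_atTop_iff_nat k₀).mp hl
  -- subsequence
  obtain ⟨p, hpK, ψ, hψ, hp⟩ := hK.tendsto_subseq (fun i => (hcomp (φ i)).2)
  let σ := fun i => φ (ψ i)
  have hσ : Tendsto σ atTop atTop := (hφ.comp hψ).tendsto_atTop
  have hξσ : Tendsto (fun i => ξ (σ i)) atTop (𝓝 x) := hφx.comp hψ.tendsto_atTop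
  have hpW : Tendsto (fun i => (W (σ i), ξ (σ i))) atTop (𝓝 p) := hp
  have hp2 : p.2 = x := tendsto_nhds_unique ((continuous_snd.tendsto p).comp hpW) hξσ
  have hγl := (hγ_cont.tendsto p).comp hpW
  have hJl := (hJc.tendsto p).comp hpW
  have hd : Tendsto (fun i => (L : ℝ) * dist (ξ (σ i)) x) atTop (𝓝 0) := by
    have := (tendsto_iff_dist_tendsto_zero.mp hξσ).const_mul (L : ℝ)
    simpa using this
  have hev : ∀ᶠ i in atTop, k₀ ≤ σ i ∧ ξ (σ i) ∈ Metric.ball x (r - r / 2) :=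
    (hσ.eventually_ge_atTop k₀).and
      (hξσ.eventually (Metric.ball_mem_nhds x (by linarith)))
  have hl1 : Tendsto (fun i => Ja x (σ i)) atTop (𝓝 l) := hl.comp hσ
  have hl2 : Tendsto (fun i => Ja x (σ i + 1)) atTop (𝓝 l) :=
    ((tendsto_add_atTop_iff_nat 1).mpr hl).comp hσ
  have hsubb : Metric.ball x (r - r / 2) ⊆ Metric.ball x r := Metric.ball_subset_ball (by linarith)
  have hγ0 : γ p.1 p.2 ≤ 0 := by
    have hlim : Tendsto (fun i => Ja x (σ i) - Ja x (σ i + 1) + ((L : ℝ) * dist (ξ (σ i)) x +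
        (L : ℝ) * dist (ξ (σ i)) x)) atTop (𝓝 0) := by
      simpa using (hl1.sub hl2).add (hd.add hd)
    refine le_of_tendsto_of_tendsto hγl hlim ?_
    filter_upwards [hev] with i hi
    have hm := hballD _ hi.1 (hsubb hi.2)
    have h1 := abs_le.mp (hLd (σ i) hi.1 _ hi.2)
    have h2 := abs_le.mp (hLd (σ i + 1) (by omega) _ hi.2)
    have h3 := hdec (σ i)
    have h4 := hWle _ hm
    have h5 := hJaU _ hm
    simp only [Function.comp]
    linarith [h1.1, h1.2, h2.1, h2.2]
  have hJp : J p.1 p.2 = Jstar p.2 := (hγ_zero _ _).mp (le_antisymm hγ0 (hγ_nonneg _ _))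
  have hlle : l ≤ Jstar x := by
    have hlim := hJl.add hd
    simp only [hJp, add_zero] at hlim
    rw [hp2] at hlim
    refine le_of_tendsto_of_tendsto hl2 hlim ?_
    filter_upwards [hev] with i hi
    have hm := hballD _ hi.1 (hsubb hi.2)
    have h2 := abs_le.mp (hLd (σ i + 1) (by omega) _ hi.2)
    have h3 := hdec (σ i)
    have h5 := hJaU _ hm
    have h6 := hγ_nonneg (W (σ i)) (ξ (σ i))
    simp only [Function.comp]
    linarith [h2.1, h2.2]
  have hlge : Jstar x ≤ l := ge_of_tendsto hl
    ((eventually_ge_atTop k₀).mono fun k hk => hlowx k hk)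
  have hleq : l = Jstar x := le_antisymm hlle hlge
  rw [hleq] at hl
  refine tendsto_of_tendsto_of_tendsto_of_le_of_le' tendsto_const_nhds hl
    (Eventually.of_forall fun k => hstarle _ _) ?_
  filter_upwards [eventually_ge_atTop k₀] with k hk
  exact hswJa k x (hballD k hk hxb)
end

section
/- Consider the nonlinear real-time MPC closed loop with Lipschitz-cone learning. Assume there is a γ : ℝ^{Nm}×ℝⁿ → ℝ≥0 such that J_N(Ψ_o(U,x),x) − J_N(U,x) ≤ −γ(U,x) for all (U,x), and that for every U the map x ↦ J_N(U,x) is Lipschitz with constant L(U). Then along every closed-loop trajectory and for every k ≥ 1 with ξ_k ∈ ℝⁿ the following chain of inequalities holds: J_N^a(ξ_k, D(k+1)) ≤ J_N(U(k+1), ξ_k) ≤ J_N(W(k), ξ_k) − γ(W(k), ξ_k) ≤ J_N(Ψ_sw(ξ_k, D(k)), ξ_k) − γ(W(k), ξ_k) ≤ J_N^a(ξ_k, D(k)) − γ(W(k), ξ_k). In particular J_N^a(ξ_k, D(k+1)) ≤ J_N^a(ξ_k, D(k)) − γ(W(k), ξ_k). -/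
open Filter Topology

/-- The descent chain for the nonlinear real-time MPC closed loop
with Lipschitz-cone learning: for every `k ≥ 1`,
`J_N^a(ξ_k, D(k+1)) ≤ J_N(U(k+1), ξ_k) ≤ J_N(W k, ξ_k) − γ(W k, ξ_k)
  ≤ J_N(Ψsw(ξ_k, D k), ξ_k) − γ(W k, ξ_k) ≤ J_N^a(ξ_k, D k) − γ(W k, ξ_k)`,
and in particular `J_N^a(ξ_k, D(k+1)) ≤ J_N^a(ξ_k, D k) − γ(W k, ξ_k)`. -/
theorem stmt_9 (n m N : ℕ) (hn : 0 < n) (hm : 0 < m) (hN : 0 < N)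
    (f : EuclideanSpace ℝ (Fin n) → EuclideanSpace ℝ (Fin m) → EuclideanSpace ℝ (Fin n))
    (J : EuclideanSpace ℝ (Fin (N * m)) → EuclideanSpace ℝ (Fin n) → ℝ)
    (L : EuclideanSpace ℝ (Fin (N * m)) → ℝ)
    (Ψtw Ψo : EuclideanSpace ℝ (Fin (N * m)) → EuclideanSpace ℝ (Fin n) →
      EuclideanSpace ℝ (Fin (N * m)))
    (γ : EuclideanSpace ℝ (Fin (N * m)) → EuclideanSpace ℝ (Fin n) → ℝ)
    (proj0 : EuclideanSpace ℝ (Fin (N * m)) → EuclideanSpace ℝ (Fin m))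
    (hproj0 : ∀ U i, proj0 U i = U (Fin.castLE (Nat.le_mul_of_pos_left m hN) i))
    -- Lipschitz continuity of the cost in the state
    (hL0 : ∀ U, 0 ≤ L U)
    (hLip : ∀ U x y, |J U x - J U y| ≤ L U * ‖x - y‖)
    -- decrease of the optimization update operator
    (hγ_nonneg : ∀ U x, 0 ≤ γ U x)
    (ho : ∀ U x, J (Ψo U x) x - J U x ≤ -γ U x)
    -- data sets and Lipschitz-cone spatial warm start
    (D : ℕ → Set (EuclideanSpace ℝ (Fin (N * m)) × EuclideanSpace ℝ (Fin n) × ℝ))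
    (Ja : EuclideanSpace ℝ (Fin n) → ℕ → ℝ)
    (Ψsw : EuclideanSpace ℝ (Fin n) → ℕ → EuclideanSpace ℝ (Fin (N * m)))
    (hJa : ∀ k, 1 ≤ k → ∀ xbar, IsLeast
      {v : ℝ | ∃ p ∈ D k, v = p.2.2 + L p.1 * ‖p.2.1 - xbar‖} (Ja xbar k))
    (hΨ : ∀ k, 1 ≤ k → ∀ xbar, ∃ x Jv, (Ψsw xbar k, x, Jv) ∈ D k ∧
      Ja xbar k = Jv + L (Ψsw xbar k) * ‖x - xbar‖)
    -- closed loop with min-selection of warm starts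
    (U W : ℕ → EuclideanSpace ℝ (Fin (N * m)))
    (X ξ : ℕ → EuclideanSpace ℝ (Fin n))
    (w : ℕ → EuclideanSpace ℝ (Fin n))
    (iT : ℕ → ℕ) (hiT : ∀ k, 1 ≤ iT k)
    (hξ : ∀ k, ξ k = f (X k) (proj0 (U k)))
    (hW_t : ∀ k, 1 ≤ k → J (Ψtw (U k) (X k)) (ξ k) < J (Ψsw (ξ k) k) (ξ k) →
      W k = Ψtw (U k) (X k))
    (hW_s : ∀ k, 1 ≤ k → ¬ J (Ψtw (U k) (X k)) (ξ k) < J (Ψsw (ξ k) k) (ξ k) →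
      W k = Ψsw (ξ k) k)
    (hU : ∀ k, 1 ≤ k → U (k + 1) = (fun V => Ψo V (ξ k))^[iT k] (W k))
    (hX : ∀ k, 1 ≤ k → X (k + 1) = ξ k + w k)
    (hD : ∀ k, 1 ≤ k → D (k + 1) = D k ∪ {(U (k + 1), ξ k, J (U (k + 1)) (ξ k))})
    (hD1fin : (D 1).Finite) (hD1ne : (D 1).Nonempty)
    (hD1 : ∀ p ∈ D 1, p.2.2 = J p.1 p.2.1) :
    ∀ k, 1 ≤ k →
      Ja (ξ k) (k + 1) ≤ J (U (k + 1)) (ξ k) ∧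
      J (U (k + 1)) (ξ k) ≤ J (W k) (ξ k) - γ (W k) (ξ k) ∧
      J (W k) (ξ k) - γ (W k) (ξ k) ≤ J (Ψsw (ξ k) k) (ξ k) - γ (W k) (ξ k) ∧
      J (Ψsw (ξ k) k) (ξ k) - γ (W k) (ξ k) ≤ Ja (ξ k) k - γ (W k) (ξ k) ∧
      Ja (ξ k) (k + 1) ≤ Ja (ξ k) k - γ (W k) (ξ k) := by
  have hdata : ∀ k, 1 ≤ k → ∀ p ∈ D k, p.2.2 = J p.1 p.2.1 := by
    intro k hk
    induction k, hk using Nat.le_induction with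
    | base => exact hD1
    | succ k hk ih =>
      intro p hp
      rw [hD k hk] at hp
      rcases hp with hp | hp
      · exact ih p hp
      · rw [Set.mem_singleton_iff] at hp
        rw [hp]
  have hiter : ∀ (i : ℕ) (V : EuclideanSpace ℝ (Fin (N * m))) (x : EuclideanSpace ℝ (Fin n)),
      J ((fun V => Ψo V x)^[i] V) x ≤ J V x := by
    intro i
    induction i with
    | zero => intro V x; simp
    | succ i ih =>
      intro V x
      rw [Function.iterate_succ_apply]
      have h1 := ih (Ψo V x) x
      have h2 := ho V x
      have h3 := hγ_nonneg V x
      linarith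
  intro k hk
  have h1 : Ja (ξ k) (k + 1) ≤ J (U (k + 1)) (ξ k) := by
    apply (hJa (k + 1) (by omega) (ξ k)).2
    refine ⟨(U (k + 1), ξ k, J (U (k + 1)) (ξ k)), ?_, by simp⟩
    rw [hD k hk]
    exact Or.inr rfl
  have h2 : J (U (k + 1)) (ξ k) ≤ J (W k) (ξ k) - γ (W k) (ξ k) := by
    rw [hU k hk]
    obtain ⟨j, hj⟩ : ∃ j, iT k = j + 1 := ⟨iT k - 1, by have := hiT k; omega⟩
    rw [hj, Function.iterate_succ_apply]
    have a := hiter j (Ψo (W k) (ξ k)) (ξ k)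
    have b := ho (W k) (ξ k)
    linarith
  have h3 : J (W k) (ξ k) ≤ J (Ψsw (ξ k) k) (ξ k) := by
    by_cases h : J (Ψtw (U k) (X k)) (ξ k) < J (Ψsw (ξ k) k) (ξ k)
    · rw [hW_t k hk h]; exact h.le
    · rw [hW_s k hk h]
  have h4 : J (Ψsw (ξ k) k) (ξ k) ≤ Ja (ξ k) k := by
    obtain ⟨x, Jv, hmem, heq⟩ := hΨ k hk (ξ k)
    have e : Jv = J (Ψsw (ξ k) k) x := hdata k hk _ hmem
    have l := (abs_le.mp (hLip (Ψsw (ξ k) k) x (ξ k))).1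
    rw [heq, e]
    linarith
  exact ⟨h1, h2, by linarith, by linarith, by linarith⟩
end

section
/- Consider the nonlinear real-time MPC closed loop with Lipschitz-cone learning. Assume: (a) for every U ∈ ℝ^{Nm}, x ↦ J_N(U,x) is Lipschitz continuous with constant L(U), and L(U(k)) ≤ M for all k ≥ 1 and some M ∈ ℝ; (b) the value function J_N^*(x) = inf_U J_N(U,x) is finite and Lipschitz continuous with constant M; (c) there is a continuous γ : ℝ^{Nm}×ℝⁿ → ℝ≥0 with γ(U,x) = 0 if and only if J_N(U,x) = J_N^*(x), such that J_N(Ψ_o(U,x),x) − J_N(U,x) ≤ −γ(U,x) for all (U,x); (d) the sequences (W(k), ξ_k) remain in a fixed compact set and J_N is continuous. Then for every ω-limit point x of the sequence (ξ_k), one has lim_{k→∞} J_N(Ψ_sw(x, D(k)), x) = J_N^*(x); i.e. the spatial warm start asymptotically attains the value function at every recurrent point. -/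
open Filter Topology

/-- Convergence of the Lipschitz-cone learning scheme
(Theorem 5 of the paper): along the nonlinear real-time MPC closed loop with
Lipschitz-cone spatial warm start and min-selection of warm starts, at every
ω-limit point `x` of the sequence `ξ k = f(x k, Π₀ U k)`, the cost of the
spatial warm start converges to the value `J_N^*(x)`. -/
theorem stmt_10 (n m N : ℕ) (hn : 0 < n) (hm : 0 < m) (hN : 0 < N)
    (f : EuclideanSpace ℝ (Fin n) → EuclideanSpace ℝ (Fin m) → EuclideanSpace ℝ (Fin n))
    (J : EuclideanSpace ℝ (Fin (N * m)) → EuclideanSpace ℝ (Fin n) → ℝ)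
    (Jstar : EuclideanSpace ℝ (Fin n) → ℝ)
    (L : EuclideanSpace ℝ (Fin (N * m)) → ℝ)
    (M : ℝ)
    (Ψtw Ψo : EuclideanSpace ℝ (Fin (N * m)) → EuclideanSpace ℝ (Fin n) →
      EuclideanSpace ℝ (Fin (N * m)))
    (γ : EuclideanSpace ℝ (Fin (N * m)) → EuclideanSpace ℝ (Fin n) → ℝ)
    (proj0 : EuclideanSpace ℝ (Fin (N * m)) → EuclideanSpace ℝ (Fin m))
    (hproj0 : ∀ U i, proj0 U i = U (Fin.castLE (Nat.le_mul_of_pos_left m hN) i))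
    -- (a) Lipschitz continuity of the cost in the state
    (hL0 : ∀ U, 0 ≤ L U)
    (hLip : ∀ U x y, |J U x - J U y| ≤ L U * ‖x - y‖)
    -- (b) value function: finite, greatest lower bound, Lipschitz with constant M
    (hJstar : ∀ x, IsGLB (Set.range fun U => J U x) (Jstar x))
    (hJstarLip : ∀ x y, |Jstar x - Jstar y| ≤ M * ‖x - y‖)
    -- (c) decrease of the optimization update operator
    (hγ_cont : Continuous fun p : EuclideanSpace ℝ (Fin (N * m)) × EuclideanSpace ℝ (Fin n) =>
      γ p.1 p.2)
    (hγ_nonneg : ∀ U x, 0 ≤ γ U x)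
    (hγ_zero : ∀ U x, γ U x = 0 ↔ J U x = Jstar x)
    (ho : ∀ U x, J (Ψo U x) x - J U x ≤ -γ U x)
    -- (d) continuity of the cost
    (hJcont : Continuous fun p : EuclideanSpace ℝ (Fin (N * m)) × EuclideanSpace ℝ (Fin n) =>
      J p.1 p.2)
    -- data sets and Lipschitz-cone spatial warm start
    (D : ℕ → Set (EuclideanSpace ℝ (Fin (N * m)) × EuclideanSpace ℝ (Fin n) × ℝ))
    (Ja : EuclideanSpace ℝ (Fin n) → ℕ → ℝ)
    (Ψsw : EuclideanSpace ℝ (Fin n) → ℕ → EuclideanSpace ℝ (Fin (N * m)))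
    (hJa : ∀ k, 1 ≤ k → ∀ xbar, IsLeast
      {v : ℝ | ∃ p ∈ D k, v = p.2.2 + L p.1 * ‖p.2.1 - xbar‖} (Ja xbar k))
    (hΨ : ∀ k, 1 ≤ k → ∀ xbar, ∃ x Jv, (Ψsw xbar k, x, Jv) ∈ D k ∧
      Ja xbar k = Jv + L (Ψsw xbar k) * ‖x - xbar‖)
    -- closed loop with min-selection of warm starts
    (U W : ℕ → EuclideanSpace ℝ (Fin (N * m)))
    (X ξ : ℕ → EuclideanSpace ℝ (Fin n))
    (w : ℕ → EuclideanSpace ℝ (Fin n))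
    (iT : ℕ → ℕ) (hiT : ∀ k, 1 ≤ iT k)
    (hξ : ∀ k, ξ k = f (X k) (proj0 (U k)))
    (hW_t : ∀ k, 1 ≤ k → J (Ψtw (U k) (X k)) (ξ k) < J (Ψsw (ξ k) k) (ξ k) →
      W k = Ψtw (U k) (X k))
    (hW_s : ∀ k, 1 ≤ k → ¬ J (Ψtw (U k) (X k)) (ξ k) < J (Ψsw (ξ k) k) (ξ k) →
      W k = Ψsw (ξ k) k)
    (hU : ∀ k, 1 ≤ k → U (k + 1) = (fun V => Ψo V (ξ k))^[iT k] (W k))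
    (hX : ∀ k, 1 ≤ k → X (k + 1) = ξ k + w k)
    (hD : ∀ k, 1 ≤ k → D (k + 1) = D k ∪ {(U (k + 1), ξ k, J (U (k + 1)) (ξ k))})
    (hD1fin : (D 1).Finite) (hD1ne : (D 1).Nonempty)
    (hD1 : ∀ p ∈ D 1, p.2.2 = J p.1 p.2.1)
    -- (a) uniform bound on the Lipschitz constants along the trajectory
    (hLM : ∀ k, 1 ≤ k → L (U k) ≤ M)
    -- (d) compactness of the closed-loop data
    (K : Set (EuclideanSpace ℝ (Fin (N * m)) × EuclideanSpace ℝ (Fin n)))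
    (hK : IsCompact K)
    (hcomp : ∀ k, 1 ≤ k → (W k, ξ k) ∈ K) :
    ∀ x : EuclideanSpace ℝ (Fin n),
      (∃ φ : ℕ → ℕ, StrictMono φ ∧ Tendsto (fun i => ξ (φ i)) atTop (𝓝 x)) →
      Tendsto (fun k => J (Ψsw x k) x) atTop (𝓝 (Jstar x)) := by
  rintro x ⟨φ, hφ, hφx⟩
  -- data invariants
  obtain ⟨C0, hC0⟩ : ∃ C0, ∀ p ∈ D 1, L p.1 ≤ C0 := by
    obtain ⟨C0, h⟩ := (hD1fin.image (fun p => L p.1)).bddAbove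
    exact ⟨C0, fun p hp => h ⟨p, hp, rfl⟩⟩
  obtain ⟨C, hCM, hCC0⟩ : ∃ C, M ≤ C ∧ C0 ≤ C := ⟨max M C0, le_max_left _ _, le_max_right _ _⟩
  have hinv : ∀ k, 1 ≤ k → ∀ p ∈ D k, p.2.2 = J p.1 p.2.1 ∧ L p.1 ≤ C := by
    intro k hk
    induction k, hk using Nat.le_induction with
    | base => exact fun p hp => ⟨hD1 p hp, (hC0 p hp).trans hCC0⟩
    | succ k hk ih =>
      intro p hp
      rw [hD k hk] at hp
      rcases hp with hp | hp
      · exact ih p hp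
      · rw [Set.mem_singleton_iff] at hp
        subst hp
        exact ⟨rfl, (hLM (k + 1) (by omega)).trans hCM⟩
  have hlow : ∀ V y, Jstar y ≤ J V y := fun V y => (hJstar y).1 ⟨V, rfl⟩
  have hswJa : ∀ k, 1 ≤ k → ∀ y, J (Ψsw y k) y ≤ Ja y k := by
    intro k hk y
    obtain ⟨z, Jv, hm1, he⟩ := hΨ k hk y
    have h1 := (hinv k hk _ hm1).1
    simp only at h1
    have h2 := (abs_le.1 (hLip (Ψsw y k) z y)).1
    rw [he, h1]; linarith
  have hJaLip : ∀ k, 1 ≤ k → ∀ y, Ja y k ≤ Ja x k + C * ‖y - x‖ := by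
    intro k hk y
    obtain ⟨z, Jv, hm1, he⟩ := hΨ k hk x
    have h1 := (hinv k hk _ hm1).2
    simp only at h1
    have h2 := (hJa k hk y).2 ⟨_, hm1, rfl⟩
    simp only at h2
    have h3 : ‖z - y‖ ≤ ‖z - x‖ + ‖y - x‖ := by
      have := norm_sub_le (z - x) (y - x)
      simpa using this
    have h4 := mul_le_mul_of_nonneg_left h3 (hL0 (Ψsw x k))
    have h5 := mul_le_mul_of_nonneg_right h1 (norm_nonneg (y - x))
    rw [he]; linarith
  have hmono : ∀ k, 1 ≤ k → Ja x (k + 1) ≤ Ja x k := by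
    intro k hk
    obtain ⟨z, Jv, hm1, he⟩ := hΨ k hk x
    refine (hJa (k + 1) (by omega) x).2 ⟨(Ψsw x k, z, Jv), ?_, he⟩
    rw [hD k hk]; exact Or.inl hm1
  have hit : ∀ y (i : ℕ) V, J ((fun V => Ψo V y)^[i] V) y ≤ J V y := by
    intro y i
    induction i with
    | zero => intro V; simp
    | succ i ih =>
      intro V
      rw [Function.iterate_succ_apply]
      have := ih (Ψo V y)
      have h1 := ho V y
      have h2 := hγ_nonneg V y
      linarith
  have hUW : ∀ k, 1 ≤ k → J (U (k + 1)) (ξ k) ≤ J (W k) (ξ k) - γ (W k) (ξ k) := by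
    intro k hk
    rw [hU k hk]
    obtain ⟨i, hi⟩ := Nat.exists_eq_add_of_le' (hiT k)
    rw [hi, Function.iterate_succ_apply]
    have := hit (ξ k) i (Ψo (W k) (ξ k))
    have h1 := ho (W k) (ξ k)
    linarith
  have hWJa : ∀ k, 1 ≤ k → J (W k) (ξ k) ≤ Ja (ξ k) k := by
    intro k hk
    have h1 := hswJa k hk (ξ k)
    by_cases h : J (Ψtw (U k) (X k)) (ξ k) < J (Ψsw (ξ k) k) (ξ k)
    · rw [hW_t k hk h]; linarith
    · rw [hW_s k hk h]; exact h1
  have hnext : ∀ k, 1 ≤ k → Ja x (k + 1) ≤ J (W k) (ξ k) - γ (W k) (ξ k) + C * ‖ξ k - x‖ := by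
    intro k hk
    have h1 := (hJa (k + 1) (by omega) x).2
      ⟨(U (k + 1), ξ k, J (U (k + 1)) (ξ k)), by rw [hD k hk]; exact Or.inr rfl, rfl⟩
    simp only at h1
    have h2 := mul_le_mul_of_nonneg_right ((hLM (k + 1) (by omega)).trans hCM)
      (norm_nonneg (ξ k - x))
    have h3 := hUW k hk
    linarith
  -- limit of `Ja x`
  have hanti : Antitone (fun k => Ja x (k + 1)) :=
    antitone_nat_of_succ_le fun k => hmono (k + 1) (by omega)
  have hJalow : ∀ k, 1 ≤ k → Jstar x ≤ Ja x k := fun k hk => (hlow _ _).trans (hswJa k hk x)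
  obtain ⟨A, hA1⟩ : ∃ A, Tendsto (fun k => Ja x (k + 1)) atTop (𝓝 A) :=
    ⟨_, tendsto_atTop_ciInf hanti ⟨Jstar x, by
      rintro _ ⟨k, rfl⟩; exact hJalow (k + 1) (by omega)⟩⟩
  have hA : Tendsto (fun k => Ja x k) atTop (𝓝 A) := (tendsto_add_atTop_iff_nat 1).1 hA1
  have hpos : ∀ i, 1 ≤ φ (i + 1) := fun i => le_trans (Nat.le_add_left 1 i) (hφ.le_apply (x := i + 1))
  obtain ⟨⟨W', x'⟩, -, θ, hθ, hlim⟩ :=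
    hK.tendsto_subseq (x := fun i => (W (φ (i + 1)), ξ (φ (i + 1)))) (fun i => hcomp _ (hpos i))
  have hφ1 : Tendsto (fun i => φ (θ i + 1)) atTop atTop :=
    hφ.tendsto_atTop.comp ((tendsto_add_atTop_nat 1).comp hθ.tendsto_atTop)
  have hξx : Tendsto (fun i => ξ (φ (θ i + 1))) atTop (𝓝 x) :=
    hφx.comp ((tendsto_add_atTop_nat 1).comp hθ.tendsto_atTop)
  have hx' : x' = x := tendsto_nhds_unique ((continuous_snd.tendsto _).comp hlim) hξx
  subst hx'
  have hJl : Tendsto (fun i => J (W (φ (θ i + 1))) (ξ (φ (θ i + 1)))) atTop (𝓝 (J W' x')) :=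
    (hJcont.tendsto (W', x')).comp hlim
  have hγl : Tendsto (fun i => γ (W (φ (θ i + 1))) (ξ (φ (θ i + 1)))) atTop (𝓝 (γ W' x')) :=
    (hγ_cont.tendsto (W', x')).comp hlim
  have hnl : Tendsto (fun i => C * ‖ξ (φ (θ i + 1)) - x'‖) atTop (𝓝 0) := by
    have := ((hξx.sub_const x').norm).const_mul C
    simpa using this
  have hγ0 : γ W' x' ≤ 0 := by
    have hr : Tendsto (fun i => Ja x' (φ (θ i + 1)) - Ja x' (φ (θ i + 1) + 1)
        + (C * ‖ξ (φ (θ i + 1)) - x'‖ + C * ‖ξ (φ (θ i + 1)) - x'‖)) atTop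
        (𝓝 (A - A + (0 + 0))) :=
      ((hA.comp hφ1).sub (hA1.comp hφ1)).add (hnl.add hnl)
    have := le_of_tendsto_of_tendsto' hγl hr (fun i => by
      have h1 := hnext _ (hpos (θ i))
      have h2 := hWJa _ (hpos (θ i))
      have h3 := hJaLip _ (hpos (θ i)) (ξ (φ (θ i + 1)))
      linarith)
    simpa using this
  have hopt : J W' x' = Jstar x' := (hγ_zero _ _).1 (le_antisymm hγ0 (hγ_nonneg _ _))
  have hAle : A ≤ Jstar x' := by
    have := le_of_tendsto_of_tendsto' (hA1.comp hφ1) (hJl.add hnl) (fun i => by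
      have h1 := hnext _ (hpos (θ i))
      have h2 := hγ_nonneg (W (φ (θ i + 1))) (ξ (φ (θ i + 1)))
      simp only [Function.comp]
      linarith)
    rw [hopt] at this
    simpa using this
  have hAge : Jstar x' ≤ A := ge_of_tendsto' hA1 (fun k => hJalow (k + 1) (by omega))
  have hAeq : A = Jstar x' := le_antisymm hAle hAge
  rw [hAeq] at hA
  refine tendsto_of_tendsto_of_tendsto_of_le_of_le' tendsto_const_nhds hA
    (Eventually.of_forall fun k => hlow _ _) ?_
  filter_upwards [eventually_ge_atTop 1] with k hk
  exact hswJa k hk x'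
end

section
/- Let a, θ ∈ ℝ and let A be the real 3×3 matrix with rows (1, 0, −a·sin θ), (0, 1, a·cos θ), (0, 0, 1). Then the eigenvalues of the symmetric matrix AᵀA are exactly 1, 1 + a²/2 + |a|·√(1 + a²/4), and 1 + a²/2 − |a|·√(1 + a²/4). Consequently, the operator norm of A with respect to the Euclidean norm satisfies ‖A‖² = 1 + |a|·√(1 + a²/4) + a²/2. -/
open Real Matrix

/-- For `A` the Jacobian of the discretized unicycle dynamics,
the eigenvalues of `AᵀA` are exactly `1`, `1 + a²/2 ± |a|√(1+a²/4)`, and hence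
the Euclidean operator norm of `A` satisfies
`‖A‖² = 1 + |a|√(1+a²/4) + a²/2`. -/
theorem stmt_14 (a θ : ℝ)
    (A : Matrix (Fin 3) (Fin 3) ℝ)
    (hA : A = !![1, 0, -a * Real.sin θ; 0, 1, a * Real.cos θ; 0, 0, 1]) :
    spectrum ℝ (Aᵀ * A) =
      {1, 1 + a ^ 2 / 2 + |a| * Real.sqrt (1 + a ^ 2 / 4),
        1 + a ^ 2 / 2 - |a| * Real.sqrt (1 + a ^ 2 / 4)} ∧
    ‖LinearMap.toContinuousLinearMap (Matrix.toEuclideanLin A)‖ ^ 2 =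
      1 + |a| * Real.sqrt (1 + a ^ 2 / 4) + a ^ 2 / 2 := by
  obtain ⟨r, hr⟩ : ∃ r, r = Real.sqrt (1 + a ^ 2 / 4) := ⟨_, rfl⟩
  have hr2 : r ^ 2 = 1 + a ^ 2 / 4 := by
    rw [hr]; exact Real.sq_sqrt (by positivity)
  have hr0 : 0 ≤ r := by rw [hr]; exact Real.sqrt_nonneg _
  have ha2 : |a| ^ 2 = a ^ 2 := sq_abs a
  have ha0 : 0 ≤ |a| := abs_nonneg a
  have hsc := Real.sin_sq_add_cos_sq θ
  rw [← hr]
  constructor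
  · ext μ
    rw [spectrum.mem_iff, Matrix.isUnit_iff_isUnit_det, isUnit_iff_ne_zero, not_not]
    have hdet : (algebraMap ℝ (Matrix (Fin 3) (Fin 3) ℝ) μ - Aᵀ * A).det =
        (μ - 1) * ((μ - (1 + a ^ 2 / 2 + |a| * r)) * (μ - (1 + a ^ 2 / 2 - |a| * r))) := by
      have e1 : (μ - (1 + a ^ 2 / 2 + |a| * r)) * (μ - (1 + a ^ 2 / 2 - |a| * r)) =
          μ ^ 2 - (2 + a ^ 2) * μ + 1 := by
        have : (|a| * r) ^ 2 = a ^ 2 * (1 + a ^ 2 / 4) := by rw [mul_pow, ha2, hr2]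
        linear_combination -this
      rw [e1, hA, Matrix.det_fin_three]
      simp [Matrix.mul_apply, Fin.sum_univ_three, Matrix.algebraMap_matrix_apply]
      linear_combination (-a ^ 2 * μ * (μ - 1)) * hsc
    rw [hdet]
    simp [sub_eq_zero]
  · obtain ⟨k, hk⟩ : ∃ k, k = |a| * r + a ^ 2 / 2 := ⟨_, rfl⟩
    have hk0 : 0 ≤ k := by rw [hk]; positivity
    have hk2 : k ^ 2 = a ^ 2 * k + a ^ 2 := by
      have : (|a| * r) ^ 2 = a ^ 2 * (1 + a ^ 2 / 4) := by rw [mul_pow, ha2, hr2]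
      rw [hk]; linear_combination this
    have hn : ∀ x : EuclideanSpace ℝ (Fin 3),
        ‖LinearMap.toContinuousLinearMap (Matrix.toEuclideanLin A) x‖ ^ 2 =
          (x 0 - a * Real.sin θ * x 2) ^ 2 + (x 1 + a * Real.cos θ * x 2) ^ 2 + x 2 ^ 2 := by
      intro x
      rw [EuclideanSpace.real_norm_sq_eq, hA]
      simp [Fin.sum_univ_three, Matrix.toLpLin_apply, Matrix.mulVec, dotProduct]
      ring
    have hx : ∀ x : EuclideanSpace ℝ (Fin 3), ‖x‖ ^ 2 = x 0 ^ 2 + x 1 ^ 2 + x 2 ^ 2 := by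
      intro x
      rw [EuclideanSpace.real_norm_sq_eq, Fin.sum_univ_three]
    rw [add_assoc, ← hk]
    apply le_antisymm
    · have h1 : ‖LinearMap.toContinuousLinearMap (Matrix.toEuclideanLin A)‖ ≤
          Real.sqrt (1 + k) := by
        apply ContinuousLinearMap.opNorm_le_bound _ (Real.sqrt_nonneg _)
        intro x
        refine (sq_le_sq₀ (norm_nonneg _) (by positivity)).1 ?_
        rw [mul_pow, Real.sq_sqrt (by positivity), hn, hx]
        obtain ⟨p, hp⟩ : ∃ p, p = -Real.sin θ * x 0 + Real.cos θ * x 1 := ⟨_, rfl⟩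
        obtain ⟨q, hq⟩ : ∃ q, q = Real.cos θ * x 0 + Real.sin θ * x 1 := ⟨_, rfl⟩
        have hpq : x 0 ^ 2 + x 1 ^ 2 = p ^ 2 + q ^ 2 := by
          rw [hp, hq]; linear_combination (-(x 0 ^ 2 + x 1 ^ 2)) * hsc
        have key : 0 ≤ k * p ^ 2 - 2 * a * p * x 2 + (k - a ^ 2) * x 2 ^ 2 := by
          rcases hk0.eq_or_lt with h | h
          · have : a ^ 2 = 0 := by rw [← h] at hk2; linarith
            have : a = 0 := by simpa using this
            simp [← h, this]
          · refine (mul_nonneg_iff_of_pos_left h).1 ?_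
            have : k * (k * p ^ 2 - 2 * a * p * x 2 + (k - a ^ 2) * x 2 ^ 2) =
                (k * p - a * x 2) ^ 2 := by linear_combination (x 2 ^ 2) * hk2
            rw [this]; positivity
        have e : (1 + k) * (x 0 ^ 2 + x 1 ^ 2 + x 2 ^ 2) -
            ((x 0 - a * Real.sin θ * x 2) ^ 2 + (x 1 + a * Real.cos θ * x 2) ^ 2 + x 2 ^ 2) =
            (k * p ^ 2 - 2 * a * p * x 2 + (k - a ^ 2) * x 2 ^ 2) + k * q ^ 2 := by
          have e2 : a * p * x 2 = a * (-Real.sin θ * x 0 + Real.cos θ * x 1) * x 2 := by rw [hp]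
          linear_combination k * hpq + 2 * e2 - a ^ 2 * x 2 ^ 2 * hsc
        have : 0 ≤ k * q ^ 2 := by positivity
        linarith
      calc _ ≤ Real.sqrt (1 + k) ^ 2 := by gcongr
        _ = 1 + k := Real.sq_sqrt (by positivity)
    · have low : ∀ v : EuclideanSpace ℝ (Fin 3), 0 < ‖v‖ ^ 2 →
          ‖LinearMap.toContinuousLinearMap (Matrix.toEuclideanLin A) v‖ ^ 2 =
            (1 + k) * ‖v‖ ^ 2 →
          1 + k ≤ ‖LinearMap.toContinuousLinearMap (Matrix.toEuclideanLin A)‖ ^ 2 := by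
        intro v hv h
        refine le_of_mul_le_mul_right ?_ hv
        rw [← h, ← mul_pow]
        gcongr
        exact ContinuousLinearMap.le_opNorm _ _
      by_cases h : a = 0
      · have hk' : k = 0 := by simp [hk, h]
        apply low !₂[0, 0, 1]
        · rw [hx]; simp
        · rw [hn, hx]; simp [h, hk']
      · apply low !₂[-a * Real.sin θ, a * Real.cos θ, k]
        · rw [hx]; simp
          have : 0 < a ^ 2 := by positivity
          nlinarith [sq_nonneg k]
        · rw [hn, hx]; simp
          linear_combination (a ^ 2 * (1 + k) * k) * hsc - k * hk2
end
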